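/- For every integer g ≥ 10, the number of numerical semigroups with multiplicity 4, genus g, and Frobenius number congruent to 1 modulo 4 equals ⌊(g+1)/5⌋² − (3/2)⌊(g+1)/3⌋² − (3/2)⌊(g+2)/6⌋² − ⌊(2g+4)/5⌋² + (5/4 − g/2)·⌊g/2⌋ + ⌊(g+1)/5⌋ + (g − 1/2)·⌊(g+1)/3⌋ + (⌊g/2⌋ − 1/2)·⌊(g+2)/6⌋ + (g + 1 − ⌊(g+1)/5⌋)·⌊(2g+4)/5⌋ − g²/8 − 7g/8, where the expression is evaluated in ℚ (it is an integer). -/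

import Mathlib

/-!
A numerical semigroup of multiplicity `4` is determined by its Kunz coordinates `(x, y, z)`: the
least elements of the residue classes `1, 2, 3` are `4x + 1, 4y + 2, 4z + 3`. The genus is
`x + y + z`, and the Frobenius number is `1` modulo `4` exactly when `y, z < x`. Closure under
addition then amounts to `x ≤ y + z + 1` and `y ≤ 2z + 1`.

After eliminating `y = g - x - z`, the semigroups are the lattice points `(x, z)` of a polygon,
which is cut along `x = D` and `z = A`, where `D = ⌊(2g + 4)/5⌋` and `A = ⌊(g + 1)/5⌋`. At the
vertex where `y = x - 1` meets `y = 2z + 1` this subdivides a cone of index `5` into unimodular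
ones, so the points with `x ≤ D` can be counted by `x`, those with `x > D` and `z < A` by `z`, and
the rest by `x`, with every fibre of a length that is affine in its index (for odd `g`, up to one
exceptional fibre). The first two sums start at `x = ⌊(g + 1)/3⌋ + 1` and `z = ⌊(g + 2)/6⌋`, which
accounts for these two floors. The three arithmetic series add up to the stated polynomial because
`A + 2D - g` and `g - 2⌊g/2⌋` both lie in `{0, 1}`.
-/

/-- A numerical semigroup: a subset of ℕ containing 0, closed under addition,
with finite complement. -/
def IsNumericalSemigroup (S : Set ℕ) : Prop :=
  0 ∈ S ∧ (∀ a ∈ S, ∀ b ∈ S, a + b ∈ S) ∧ Sᶜ.Finite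

/-- The genus: the number of gaps of `S`. -/
noncomputable def nsGenus (S : Set ℕ) : ℕ := Sᶜ.ncard

/-- The Frobenius number: the largest gap of `S`. -/
noncomputable def nsFrobenius (S : Set ℕ) : ℕ := sSup Sᶜ

/-- The multiplicity: the least positive element of `S`. -/
noncomputable def nsMultiplicity (S : Set ℕ) : ℕ := sInf {n | n ∈ S ∧ n ≠ 0}

/-- A minimal generator: a nonzero element of `S` that is not a sum of two
nonzero elements of `S`. -/
def IsMinimalGenerator (S : Set ℕ) (n : ℕ) : Prop :=
  n ∈ S ∧ n ≠ 0 ∧ ¬ ∃ a b, a ∈ S ∧ b ∈ S ∧ a ≠ 0 ∧ b ≠ 0 ∧ a + b = n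

/-- The embedding dimension: the number of minimal generators of `S`. -/
noncomputable def nsEmbDim (S : Set ℕ) : ℕ := {n | IsMinimalGenerator S n}.ncard

/-- The number of numerical semigroups with multiplicity `m` and genus `g`. -/
noncomputable def numSgps (m g : ℕ) : ℕ :=
  {S : Set ℕ | IsNumericalSemigroup S ∧ nsMultiplicity S = m ∧ nsGenus S = g}.ncard

/-- The number of numerical semigroups with multiplicity `m`, genus `g`, and
Frobenius number congruent to `r` modulo 4. -/
noncomputable def numSgpsFrobMod4 (m g r : ℕ) : ℕ :=
  {S : Set ℕ | IsNumericalSemigroup S ∧ nsMultiplicity S = m ∧ nsGenus S = g ∧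
    nsFrobenius S % 4 = r}.ncard

section KunzCoordinates

variable {m : ℕ} [NeZero m] {k : Fin m → ℕ}

/-- The set with Kunz coordinates `k`: its elements congruent to `i` modulo `m` are the numbers
`q * m + i` with `k i ≤ q`. The coordinate `k 0`, which is `0` for a semigroup and usually omitted,
is kept so that residues can be added in `Fin m`. -/
def kunzSet (k : Fin m → ℕ) : Set ℕ := {n | k (Fin.ofNat m n) ≤ n / m}

lemma mul_add_mem_kunzSet {q : ℕ} {i : Fin m} : q * m + i ∈ kunzSet k ↔ k i ≤ q := by
  obtain ⟨hq, hi⟩ := Prod.ext_iff.mp ((Nat.divModEquiv m).apply_symm_apply (q, i))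
  simp only [Nat.divModEquiv_apply, Nat.divModEquiv_symm_apply] at hq hi
  rw [kunzSet, Set.mem_ofPred_eq, hq, hi]

lemma exists_eq_mul_add_fin (m : ℕ) [NeZero m] (n : ℕ) : ∃ (q : ℕ) (i : Fin m), n = q * m + i :=
  ⟨n / m, Fin.ofNat m n, (Nat.div_add_mod' n m).symm⟩

lemma kunzSet_injective : Function.Injective (kunzSet (m := m)) := fun k k' h =>
  funext fun i => eq_of_forall_ge_iff fun q => by
    rw [← mul_add_mem_kunzSet, h, mul_add_mem_kunzSet]

lemma compl_kunzSet (k : Fin m → ℕ) : (kunzSet k)ᶜ =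
    (fun p : Σ _ : Fin m, ℕ => p.2 * m + p.1) ''
      (Finset.univ.sigma fun i => Finset.range (k i) : Finset (Σ _ : Fin m, ℕ)) := by
  ext n
  simp only [Set.mem_compl_iff, Set.mem_image, SetLike.mem_coe, Finset.mem_sigma,
    Finset.mem_univ, Finset.mem_range, true_and, Sigma.exists]
  constructor
  · intro hn
    obtain ⟨q, i, rfl⟩ := exists_eq_mul_add_fin m n
    rw [mul_add_mem_kunzSet, not_le] at hn
    exact ⟨i, q, hn, rfl⟩
  · rintro ⟨i, q, hq, rfl⟩
    rwa [mul_add_mem_kunzSet, not_le]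

lemma finite_compl_kunzSet (k : Fin m → ℕ) : (kunzSet k)ᶜ.Finite :=
  compl_kunzSet k ▸ (Finset.finite_toSet _).image _

lemma nsGenus_kunzSet (k : Fin m → ℕ) : nsGenus (kunzSet k) = ∑ i, k i := by
  have hinj : Function.Injective fun p : Σ _ : Fin m, ℕ => p.2 * m + (p.1 : ℕ) := by
    rintro ⟨i, q⟩ ⟨j, r⟩ h
    obtain ⟨rfl, rfl⟩ := Prod.ext_iff.mp ((Nat.divModEquiv m).symm.injective
      (a₁ := (q, i)) (a₂ := (r, j)) h)
    rfl
  rw [nsGenus, compl_kunzSet, Set.ncard_image_of_injective _ hinj, Set.ncard_coe_finset,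
    Finset.card_sigma]
  simp only [Finset.card_range]

lemma isNumericalSemigroup_kunzSet_iff : IsNumericalSemigroup (kunzSet k) ↔
    k 0 = 0 ∧ ∀ i j, k (i + j) ≤ k i + k j + (i + j : ℕ) / m := by
  have zero_mem_iff : 0 ∈ kunzSet k ↔ k 0 = 0 := by
    simpa using mul_add_mem_kunzSet (k := k) (q := 0) (i := 0)
  have add_mem_iff (q r : ℕ) (i j : Fin m) : (q * m + i) + (r * m + j) ∈ kunzSet k ↔
      k (i + j) ≤ q + r + (i + j : ℕ) / m := by
    rw [← mul_add_mem_kunzSet, Fin.val_add, add_mul _ _ m, add_assoc _ (_ * m), Nat.div_add_mod']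
    ring_nf
  refine and_congr zero_mem_iff ⟨fun ⟨hadd, _⟩ i j => ?_, fun h => ⟨fun a ha b hb => ?_, ?_⟩⟩
  · exact (add_mem_iff _ _ i j).mp (hadd _ (mul_add_mem_kunzSet.mpr le_rfl)
      _ (mul_add_mem_kunzSet.mpr le_rfl))
  · obtain ⟨q, i, rfl⟩ := exists_eq_mul_add_fin m a
    obtain ⟨r, j, rfl⟩ := exists_eq_mul_add_fin m b
    rw [mul_add_mem_kunzSet] at ha hb
    rw [add_mem_iff]
    exact (h i j).trans (by gcongr)
  · exact finite_compl_kunzSet k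

lemma nsMultiplicity_eq_iff {S : Set ℕ} {m : ℕ} (hm : m ≠ 0) :
    nsMultiplicity S = m ↔ m ∈ S ∧ ∀ n, n ≠ 0 → n < m → n ∉ S := by
  constructor
  · rintro rfl
    have hmem := Nat.sInf_mem (Nat.nonempty_of_pos_sInf (Nat.pos_of_ne_zero hm))
    exact ⟨hmem.1, fun n h0 hlt hn => Nat.notMem_of_lt_sInf hlt ⟨hn, h0⟩⟩
  · rintro ⟨hmem, hmin⟩
    refine IsLeast.csInf_eq ⟨⟨hmem, hm⟩, fun n ⟨hn, h0⟩ => ?_⟩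
    by_contra! hlt
    exact hmin n h0 hlt hn

lemma nsMultiplicity_kunzSet_eq_iff :
    nsMultiplicity (kunzSet k) = m ↔ k 0 ≤ 1 ∧ ∀ i, i ≠ 0 → k i ≠ 0 := by
  rw [nsMultiplicity_eq_iff (NeZero.ne m)]
  have fin_mem_iff (i : Fin m) : (i : ℕ) ∈ kunzSet k ↔ k i = 0 := by
    simpa using mul_add_mem_kunzSet (k := k) (q := 0) (i := i)
  refine and_congr (by simpa using mul_add_mem_kunzSet (k := k) (q := 1) (i := 0)) ?_
  constructor
  · intro h i hi
    rw [Ne, ← fin_mem_iff]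
    exact h i (Fin.val_ne_zero_iff.mpr hi) i.isLt
  · intro h n h0 hlt
    have := h ⟨n, hlt⟩ (by simpa [Fin.ext_iff] using h0)
    rwa [Ne, ← fin_mem_iff] at this

/-- Selmer's formula: the numbers `k i * m + i` form the Apéry set of `kunzSet k`. -/
lemma isGreatest_nsFrobenius_kunzSet_add (hk : k ≠ 0) :
    IsGreatest (Set.range fun i => k i * m + i) (nsFrobenius (kunzSet k) + m) := by
  have hbdd := (finite_compl_kunzSet k).bddAbove
  have gap_le {q : ℕ} {i : Fin m} (h : q < k i) : q * m + i ≤ nsFrobenius (kunzSet k) :=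
    le_csSup hbdd fun hmem => h.not_ge (mul_add_mem_kunzSet.mp hmem)
  constructor
  · obtain ⟨j, hj⟩ := Function.ne_iff.mp hk
    have hgap : nsFrobenius (kunzSet k) ∈ (kunzSet k)ᶜ := Nat.sSup_mem
      ⟨0 * m + j, fun hmem => hj (Nat.le_zero.mp (mul_add_mem_kunzSet.mp hmem))⟩ hbdd
    obtain ⟨q, i, hF⟩ := exists_eq_mul_add_fin m (nsFrobenius (kunzSet k))
    rw [hF, Set.mem_compl_iff, mul_add_mem_kunzSet, not_le] at hgap
    have hle : k i ≤ q + 1 := by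
      by_contra! hlt
      have := gap_le hlt
      rw [hF, add_mul] at this
      have := NeZero.pos m
      omega
    refine ⟨i, ?_⟩
    simp only [hF, show k i = q + 1 by omega]
    ring
  · rintro _ ⟨i, rfl⟩
    dsimp only
    rcases Nat.eq_zero_or_pos (k i) with h0 | hpos
    · rw [h0]
      omega
    · have := gap_le (Nat.sub_one_lt_of_lt hpos)
      have hstep : k i * m = (k i - 1) * m + m := by
        rw [← Nat.succ_mul, Nat.succ_eq_add_one, Nat.sub_add_cancel hpos]
      omega

lemma nsFrobenius_kunzSet_mod_eq_iff (hk : k ≠ 0) (r : Fin m) :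
    nsFrobenius (kunzSet k) % m = r ↔ ∀ i, k i * m + i ≤ k r * m + r := by
  obtain ⟨⟨j, hj⟩, hmax⟩ := isGreatest_nsFrobenius_kunzSet_add hk
  dsimp only at hj
  have hmod (i : Fin m) : (k i * m + i) % m = i := Nat.mul_add_mod_of_lt i.isLt
  constructor
  · intro hr
    have hjr : j = r := by rw [Fin.ext_iff, ← hr, ← hmod j, hj, Nat.add_mod_right]
    exact fun i => hjr ▸ hj ▸ hmax ⟨i, rfl⟩
  · intro h
    have heq : k r * m + r = nsFrobenius (kunzSet k) + m :=
      le_antisymm (hmax ⟨r, rfl⟩) (hj ▸ h j)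
    rw [← Nat.add_mod_right, ← heq, hmod]

lemma exists_kunzSet_eq {S : Set ℕ} (hS : IsNumericalSemigroup S) (hm : m ∈ S) :
    ∃ k : Fin m → ℕ, kunzSet k = S := by
  obtain ⟨-, hadd, hfin⟩ := hS
  have hne (i : Fin m) : ∃ q, q * m + i ∈ S := by
    by_contra! h
    have hinj : Function.Injective fun q => q * m + (i : ℕ) :=
      (add_left_injective _).comp (mul_left_injective₀ (NeZero.ne m))
    exact Set.infinite_of_injective_forall_mem hinj h hfin
  classical
  refine ⟨fun i => Nat.find (hne i), Set.ext fun n => ?_⟩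
  obtain ⟨q, i, rfl⟩ := exists_eq_mul_add_fin m n
  rw [mul_add_mem_kunzSet]
  refine ⟨fun h => ?_, Nat.find_min' (hne i)⟩
  induction q, h using Nat.le_induction with
  | base => exact Nat.find_spec (hne i)
  | succ q _ ih =>
    rw [add_mul, one_mul, add_right_comm]
    exact hadd _ ih _ hm

end KunzCoordinates

lemma isNumericalSemigroup_kunzSet_four_iff {k : Fin 4 → ℕ} : IsNumericalSemigroup (kunzSet k) ↔
    k 0 = 0 ∧ k 2 ≤ 2 * k 1 ∧ k 3 ≤ k 1 + k 2 ∧ k 1 ≤ k 2 + k 3 + 1 ∧ k 2 ≤ 2 * k 3 + 1 := by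
  rw [isNumericalSemigroup_kunzSet_iff]
  constructor
  · rintro ⟨h0, h⟩
    have h11 : k 2 ≤ k 1 + k 1 := h 1 1
    have h12 : k 3 ≤ k 1 + k 2 := h 1 2
    have h23 : k 1 ≤ k 2 + k 3 + 1 := h 2 3
    have h33 : k 2 ≤ k 3 + k 3 + 1 := h 3 3
    omega
  · rintro ⟨h0, h⟩
    refine ⟨h0, fun i j => ?_⟩
    fin_cases i <;> fin_cases j <;> simp [h0] <;> omega

lemma nsFrobenius_kunzSet_four_mod_eq_one_iff {k : Fin 4 → ℕ} (hk : k ≠ 0) :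
    nsFrobenius (kunzSet k) % 4 = 1 ↔ k 0 ≤ k 1 ∧ k 2 < k 1 ∧ k 3 < k 1 := by
  refine (nsFrobenius_kunzSet_mod_eq_iff hk 1).trans ?_
  constructor
  · intro h
    have h0 : k 0 * 4 + 0 ≤ k 1 * 4 + 1 := h 0
    have h2 : k 2 * 4 + 2 ≤ k 1 * 4 + 1 := h 2
    have h3 : k 3 * 4 + 3 ≤ k 1 * 4 + 1 := h 3
    omega
  · intro h i
    fin_cases i <;> simp <;> omega

/-- The points `(x, z)` such that `x`, `y = g - x - z` and `z` are the nonzero Kunz coordinates of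
a semigroup of multiplicity `4` and genus `g` with Frobenius number `1` modulo `4`. -/
def frobOnePairs (g : ℕ) : Finset (ℕ × ℕ) :=
  {p ∈ Finset.range g ×ˢ Finset.range g | 1 ≤ p.2 ∧ p.2 < p.1 ∧
    p.1 + p.2 < g ∧ g < 2 * p.1 + p.2 ∧ 2 * p.1 ≤ g + 1 ∧ g ≤ p.1 + 3 * p.2 + 1}

lemma mem_frobOnePairs {g x z : ℕ} : (x, z) ∈ frobOnePairs g ↔ 1 ≤ z ∧ z < x ∧
    x + z < g ∧ g < 2 * x + z ∧ 2 * x ≤ g + 1 ∧ g ≤ x + 3 * z + 1 := by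
  simp only [frobOnePairs, Finset.mem_filter, Finset.mem_product, Finset.mem_range]
  omega

lemma kunzSet_four_frobOne_iff {g : ℕ} {k : Fin 4 → ℕ} :
    (IsNumericalSemigroup (kunzSet k) ∧ nsMultiplicity (kunzSet k) = 4 ∧
      nsGenus (kunzSet k) = g ∧ nsFrobenius (kunzSet k) % 4 = 1) ↔
    k 0 = 0 ∧ k 1 + k 2 + k 3 = g ∧ (k 1, k 3) ∈ frobOnePairs g := by
  have mult_iff : nsMultiplicity (kunzSet k) = 4 ↔ k 0 ≤ 1 ∧ k 1 ≠ 0 ∧ k 2 ≠ 0 ∧ k 3 ≠ 0 := by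
    simp [nsMultiplicity_kunzSet_eq_iff, Fin.forall_fin_succ]
  rw [isNumericalSemigroup_kunzSet_four_iff, mult_iff, nsGenus_kunzSet, Fin.sum_univ_four,
    mem_frobOnePairs]
  by_cases hk : k = 0
  · simp [hk]
  · rw [nsFrobenius_kunzSet_four_mod_eq_one_iff hk]
    omega

lemma numSgpsFrobMod4_four_one (g : ℕ) : numSgpsFrobMod4 4 g 1 = (frobOnePairs g).card := by
  let f : ℕ × ℕ → Set ℕ := fun p => kunzSet ![0, p.1, g - p.1 - p.2, p.2]
  have hf : Function.Injective f := fun p q h => by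
    have hcoord := kunzSet_injective h
    exact Prod.ext (congrFun hcoord 1) (congrFun hcoord 3)
  rw [numSgpsFrobMod4, ← Set.ncard_coe_finset, ← Set.ncard_image_of_injective _ hf]
  congr 1
  ext S
  constructor
  · rintro ⟨hS, hm, hrest⟩
    obtain ⟨k, rfl⟩ := exists_kunzSet_eq hS ((nsMultiplicity_eq_iff four_ne_zero).mp hm).1
    obtain ⟨h0, hsum, hmem⟩ := kunzSet_four_frobOne_iff.mp ⟨hS, hm, hrest⟩
    refine ⟨(k 1, k 3), hmem, congrArg kunzSet (funext fun i => ?_)⟩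
    fin_cases i
    · exact h0.symm
    · rfl
    · change g - k 1 - k 3 = k 2
      omega
    · rfl
  · rintro ⟨⟨x, z⟩, hp, rfl⟩
    refine kunzSet_four_frobOne_iff.mpr ⟨rfl, ?_, hp⟩
    have := (mem_frobOnePairs.mp hp).2.2.1
    change x + (g - x - z) + z = g
    omega

section Counting

open Finset

lemma card_frobOnePairs_fst_le {g : ℕ} (hg : 4 ≤ g) :
    (#{p ∈ frobOnePairs g | p.1 ≤ (2 * g + 4) / 5} : ℤ) =
      ∑ x ∈ Ico ((g + 1) / 3 + 1) ((2 * g + 4) / 5 + 1), (3 * x - (g + 1) : ℤ) := by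
  rw [card_eq_sum_ones, sum_finset_product _ (Ico ((g + 1) / 3 + 1) ((2 * g + 4) / 5 + 1))
    fun x => Ioo (g - 2 * x) x]
  · push_cast
    refine sum_congr rfl fun x hx => ?_
    rw [mem_Ico] at hx
    rw [sum_const, Nat.card_Ioo, nsmul_one]
    omega
  · rintro ⟨x, z⟩
    simp only [mem_filter, mem_frobOnePairs, mem_Ico, mem_Ioo]
    omega

lemma card_frobOnePairs_snd_lt {g : ℕ} (hg : 4 ≤ g) :
    (#{p ∈ frobOnePairs g | ¬ p.1 ≤ (2 * g + 4) / 5 ∧ p.2 < (g + 1) / 5} : ℤ) =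
      ∑ z ∈ Ico ((g + 2) / 6) ((g + 1) / 5), (3 * z - ((g / 2 : ℕ) - 2) : ℤ) := by
  rw [card_eq_sum_ones, sum_finset_product_right _ (Ico ((g + 2) / 6) ((g + 1) / 5))
    fun z => Icc (g - 1 - 3 * z) (g - g / 2)]
  · push_cast
    refine sum_congr rfl fun x hx => ?_
    rw [mem_Ico] at hx
    rw [sum_const, Nat.card_Icc, nsmul_one]
    omega
  · rintro ⟨x, z⟩
    simp only [mem_filter, mem_frobOnePairs, mem_Ico, mem_Icc]
    omega

lemma card_frobOnePairs_rest {g : ℕ} (hg : 4 ≤ g) :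
    (#{p ∈ frobOnePairs g | ¬ p.1 ≤ (2 * g + 4) / 5 ∧ ¬ p.2 < (g + 1) / 5} : ℤ) =
      ∑ x ∈ Ico ((2 * g + 4) / 5 + 1) (g / 2 + 1), (x - ((g + 1) / 5 : ℕ) : ℤ) +
        (g - 2 * (g / 2 : ℕ)) * ((g / 2 : ℕ) - ((g + 1) / 5 : ℕ)) := by
  rw [card_eq_sum_ones, sum_finset_product _ (Ico ((2 * g + 4) / 5 + 1) (g - g / 2 + 1))
    fun x => Ico ((g + 1) / 5) (min x (g / 2))]
  · simp only [sum_const, Nat.card_Ico, smul_eq_mul, mul_one]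
    rw [← sum_Ico_consecutive _ (show (2 * g + 4) / 5 + 1 ≤ g / 2 + 1 by omega) (by omega)]
    push_cast
    congr 1
    · refine sum_congr rfl fun x hx => ?_
      rw [mem_Ico] at hx
      omega
    · have hmin : ∀ x ∈ Ico (g / 2 + 1) (g - g / 2 + 1),
          ((min x (g / 2) - (g + 1) / 5 : ℕ) : ℤ) = (g / 2 : ℕ) - ((g + 1) / 5 : ℕ) := by
        intro x hx
        rw [mem_Ico] at hx
        omega
      rw [sum_congr rfl hmin, sum_const, Nat.card_Ico, nsmul_eq_mul]
      congr 1
      omega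
  · rintro ⟨x, z⟩
    simp only [mem_filter, mem_frobOnePairs, mem_Ico, lt_min_iff]
    omega

lemma two_mul_sum_Ico_mul_sub {R : Type*} [CommRing R] (c d : R) {a b : ℕ} (hab : a ≤ b) :
    2 * ∑ x ∈ Ico a b, (c * x - d) = (b - a) * (c * (a + b - 1) - 2 * d) := by
  induction b, hab using Nat.le_induction with
  | base => simp
  | succ n hn ih =>
    rw [sum_Ico_succ_top hn, mul_add, ih]
    push_cast
    ring

lemma two_mul_card_frobOnePairs {g A C D E h : ℕ} (hg : 4 ≤ g) (hA : A = (g + 1) / 5)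
    (hC : C = (g + 1) / 3) (hD : D = (2 * g + 4) / 5) (hE : E = (g + 2) / 6) (hh : h = g / 2) :
    (2 * #(frobOnePairs g) : ℤ) =
      (D - C) * (3 * (C + D + 1) - 2 * (g + 1)) + (A - E) * (3 * (E + A - 1) - 2 * (h - 2)) +
        (h - D) * (D + h + 1 - 2 * A) + 2 * (g - 2 * h) * (h - A) := by
  have low := two_mul_sum_Ico_mul_sub (3 : ℤ) (g + 1) (show C + 1 ≤ D + 1 by omega)
  have right := two_mul_sum_Ico_mul_sub (3 : ℤ) (h - 2) (show E ≤ A by omega)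
  have rest := two_mul_sum_Ico_mul_sub (1 : ℤ) A (show D + 1 ≤ h + 1 by omega)
  have hsplit : #(frobOnePairs g) =
      #{p ∈ frobOnePairs g | p.1 ≤ D} +
      (#{p ∈ frobOnePairs g | ¬ p.1 ≤ D ∧ p.2 < A} +
      #{p ∈ frobOnePairs g | ¬ p.1 ≤ D ∧ ¬ p.2 < A}) := by
    simp only [← filter_filter, card_filter_add_card_filter_not]
  subst hA hC hD hE hh
  rw [hsplit]
  push_cast at low right rest ⊢
  rw [card_frobOnePairs_fst_le hg, card_frobOnePairs_snd_lt hg, card_frobOnePairs_rest hg]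
  simp only [one_mul] at rest
  push_cast
  linear_combination low + right + rest

lemma frobOnePairs_eq_empty {g : ℕ} (hg : g < 4) : frobOnePairs g = ∅ :=
  eq_empty_of_forall_notMem fun p hp => by
    have := mem_frobOnePairs.mp hp
    omega

lemma card_frobOnePairs {g A C D E h : ℕ} (hg : g ≠ 3) (hA : A = (g + 1) / 5)
    (hC : C = (g + 1) / 3) (hD : D = (2 * g + 4) / 5) (hE : E = (g + 2) / 6) (hh : h = g / 2) :
    (#(frobOnePairs g) : ℚ) =
      A ^ 2 - 3 / 2 * C ^ 2 - 3 / 2 * E ^ 2 - D ^ 2 + (5 / 4 - g / 2) * h + A +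
        (g - 1 / 2) * C + (h - 1 / 2) * E + (g + 1 - A) * D - g ^ 2 / 8 - 7 * g / 8 := by
  rcases lt_or_ge g 4 with hlt | hge
  · rw [frobOnePairs_eq_empty hlt, hA, hC, hD, hE, hh]
    interval_cases g
    · norm_num
    · norm_num
    · norm_num
    · exact absurd rfl hg
  · have hcard := congrArg (Int.cast (R := ℚ)) (two_mul_card_frobOnePairs hge hA hC hD hE hh)
    push_cast at hcard
    have hparity : (g - 2 * h : ℚ) * (g - 2 * h - 1) = 0 := by
      have : g = 2 * h ∨ g = 2 * h + 1 := by omega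
      rw [mul_eq_zero, sub_sub, sub_eq_zero, sub_eq_zero]
      exact_mod_cast this
    have hfifths : (A + 2 * D - g : ℚ) * (A + 2 * D - g - 1) = 0 := by
      have : A + 2 * D = g ∨ A + 2 * D = g + 1 := by omega
      rw [mul_eq_zero, sub_sub, sub_eq_zero, sub_eq_zero]
      exact_mod_cast this
    linear_combination hcard / 2 - 3 / 8 * hparity + 1 / 2 * hfifths

end Counting

theorem statement13_general (g : ℕ) (hg : g ≠ 3) :
    (numSgpsFrobMod4 4 g 1 : ℚ) =
      (⌊((g : ℚ) + 1) / 5⌋ : ℚ) ^ 2 - 3 / 2 * (⌊((g : ℚ) + 1) / 3⌋ : ℚ) ^ 2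
        - 3 / 2 * (⌊((g : ℚ) + 2) / 6⌋ : ℚ) ^ 2 - (⌊(2 * (g : ℚ) + 4) / 5⌋ : ℚ) ^ 2
        + (5 / 4 - (g : ℚ) / 2) * (⌊(g : ℚ) / 2⌋ : ℚ) + (⌊((g : ℚ) + 1) / 5⌋ : ℚ)
        + ((g : ℚ) - 1 / 2) * (⌊((g : ℚ) + 1) / 3⌋ : ℚ)
        + ((⌊(g : ℚ) / 2⌋ : ℚ) - 1 / 2) * (⌊((g : ℚ) + 2) / 6⌋ : ℚ)
        + ((g : ℚ) + 1 - (⌊((g : ℚ) + 1) / 5⌋ : ℚ)) * (⌊(2 * (g : ℚ) + 4) / 5⌋ : ℚ)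
        - (g : ℚ) ^ 2 / 8 - 7 * (g : ℚ) / 8 := by
  have floor_div (n d : ℕ) : (⌊(n : ℚ) / d⌋ : ℚ) = (n / d : ℕ) := by
    rw [Rat.floor_natCast_div_natCast]
    norm_cast
  have hA : (⌊((g : ℚ) + 1) / 5⌋ : ℚ) = ((g + 1) / 5 : ℕ) := mod_cast floor_div (g + 1) 5
  have hC : (⌊((g : ℚ) + 1) / 3⌋ : ℚ) = ((g + 1) / 3 : ℕ) := mod_cast floor_div (g + 1) 3
  have hD : (⌊(2 * (g : ℚ) + 4) / 5⌋ : ℚ) = ((2 * g + 4) / 5 : ℕ) :=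
    mod_cast floor_div (2 * g + 4) 5
  have hE : (⌊((g : ℚ) + 2) / 6⌋ : ℚ) = ((g + 2) / 6 : ℕ) := mod_cast floor_div (g + 2) 6
  have hh : (⌊(g : ℚ) / 2⌋ : ℚ) = (g / 2 : ℕ) := mod_cast floor_div g 2
  rw [numSgpsFrobMod4_four_one, hA, hC, hD, hE, hh]
  exact card_frobOnePairs hg rfl rfl rfl rfl rfl

/-- count of numerical semigroups with multiplicity 4, genus `g ≥ 10`, Frobenius number ≡ 1 (mod 4). -/
theorem statement13 (g : ℕ) (hg : 10 ≤ g) :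
    (numSgpsFrobMod4 4 g 1 : ℚ) =
      ((⌊((g : ℚ)+1)/5⌋ : ℚ))^2 - (3/2) * ((⌊((g : ℚ)+1)/3⌋ : ℚ))^2 - (3/2) * ((⌊((g : ℚ)+2)/6⌋ : ℚ))^2 - ((⌊(2*(g : ℚ)+4)/5⌋ : ℚ))^2 + (5/4 - (g : ℚ)/2) * ((⌊(g : ℚ)/2⌋ : ℚ)) + ((⌊((g : ℚ)+1)/5⌋ : ℚ)) + ((g : ℚ) - 1/2) * ((⌊((g : ℚ)+1)/3⌋ : ℚ)) + (((⌊(g : ℚ)/2⌋ : ℚ)) - 1/2) * ((⌊((g : ℚ)+2)/6⌋ : ℚ)) + ((g : ℚ) + 1 - ((⌊((g : ℚ)+1)/5⌋ : ℚ))) * ((⌊(2*(g : ℚ)+4)/5⌋ : ℚ)) - (g : ℚ)^2/8 - 7*(g : ℚ)/8 := by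
  exact statement13_general g (by omega)
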